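/- (Proposition: postulate FD4pw for univariate Φ-depths with increasing functionals.) Let d = 1 and let E additionally carry a partial order compatible with its vector space structure (for instance, a space of real functions with the pointwise order). Suppose every φ ∈ Φ is increasing: x ≤ y implies φ(x) ≤ φ(y). Suppose D¹ is monotone on rays in the univariate form: if ζ* is a deepest point of a univariate cloud ξ (D¹(ζ* | ξ) ≥ D¹(v | ξ) for all v ∈ ℝ), then ζ* ≤ a ≤ b or b ≤ a ≤ ζ* implies D¹(a | ξ) ≥ D¹(b | ξ). If z* ∈ E satisfies D(z* | X) = 1, then for all y, z ∈ E with z* ≤ y ≤ z or z ≤ y ≤ z* it holds that D(y | X) ≥ D(z | X). -/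

import Mathlib

/-!
Depth `1` is the largest value `D¹` can take, so an infimum equal to `1` forces every projection
`φ z*` to be a deepest point of the projected cloud. An increasing `φ` preserves the chain
`z*, y, z`, and monotonicity on rays then compares the two infima term by term.
-/

section OrderBetween

variable {α β : Type*} [Preorder α] [Preorder β]

/-- `x` lies between `a` and `b` in the order, whichever of the endpoints is the smaller one.
Unlike `x ∈ Set.uIcc a b`, this needs no lattice and forces `a` and `b` to be comparable. -/
def OrderBetween (a x b : α) : Prop :=
  (a ≤ x ∧ x ≤ b) ∨ (b ≤ x ∧ x ≤ a)

theorem OrderBetween.map {f : α → β} {a x b : α} (h : OrderBetween a x b) (hf : Monotone f) :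
    OrderBetween (f a) (f x) (f b) :=
  h.imp (.imp (@hf _ _) (@hf _ _)) (.imp (@hf _ _) (@hf _ _))

end OrderBetween

section PhiDepth

variable {E β ι κ : Type*} {D1 : β → (ι → β) → ℝ} {φ : κ → E → β} {X : ι → E}

/-- `ζ` is a deepest point of the cloud `ξ` for the depth `D1`. -/
def IsDeepest (D1 : β → (ι → β) → ℝ) (ζ : β) (ξ : ι → β) : Prop :=
  ∀ v, D1 v ξ ≤ D1 ζ ξ

/-- The depth `D1` is monotone on rays: it does not increase when moving away, in either direction
of the order, from a deepest point of the cloud. -/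
def MonotoneOnRays [Preorder β] (D1 : β → (ι → β) → ℝ) : Prop :=
  ∀ (ξ : ι → β) (ζ : β), IsDeepest D1 ζ ξ → ∀ a b, OrderBetween ζ a b → D1 b ξ ≤ D1 a ξ

/-- The Φ-depth of `z` in the cloud `X`, for the set `Φ` of projections given as a family
`φ : κ → E → β`. The infimum is the real one, with value `0` when `κ` is empty. -/
noncomputable def phiDepth (D1 : β → (ι → β) → ℝ) (φ : κ → E → β) (z : E) (X : ι → E) : ℝ :=
  ⨅ k, D1 (φ k z) (φ k ∘ X)

theorem sInf_setOf_eq_phiDepth {F : Type*} [FunLike F E β] (D1 : β → (ι → β) → ℝ) (Φ : Set F)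
    (z : E) (X : ι → E) :
    sInf {v : ℝ | ∃ f ∈ Φ, v = D1 (f z) (fun i => f (X i))} =
      phiDepth D1 (fun f : Φ => ⇑f.1) z X := by
  refine congrArg sInf (Set.ext fun v => ?_)
  simp [Function.comp_def, eq_comm]

theorem phiDepth_le (hD1 : ∀ ζ ξ, 0 ≤ D1 ζ ξ) (k : κ) (z : E) :
    phiDepth D1 φ z X ≤ D1 (φ k z) (φ k ∘ X) :=
  ciInf_le ⟨0, Set.forall_mem_range.2 fun _ => hD1 _ _⟩ k

theorem isDeepest_of_forall_le_phiDepth (hD1 : ∀ ζ ξ, 0 ≤ D1 ζ ξ) {k : κ} {z : E}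
    (hz : ∀ v, D1 v (φ k ∘ X) ≤ phiDepth D1 φ z X) : IsDeepest D1 (φ k z) (φ k ∘ X) :=
  fun v => (hz v).trans (phiDepth_le hD1 k z)

theorem phiDepth_le_phiDepth_of_isDeepest [Preorder E] [Preorder β] [Nonempty κ]
    (hD1 : ∀ ζ ξ, 0 ≤ D1 ζ ξ) (hφ : ∀ k, Monotone (φ k)) (hray : MonotoneOnRays D1)
    {zstar y z : E} (hzstar : ∀ k, IsDeepest D1 (φ k zstar) (φ k ∘ X))
    (hyz : OrderBetween zstar y z) : phiDepth D1 φ z X ≤ phiDepth D1 φ y X :=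
  le_ciInf fun k => calc
    phiDepth D1 φ z X ≤ D1 (φ k z) (φ k ∘ X) := phiDepth_le hD1 k z
    _ ≤ D1 (φ k y) (φ k ∘ X) := hray _ _ (hzstar k) _ _ (hyz.map (hφ k))

theorem phi_depth_FD4pw_general [Preorder E] [Preorder β] [Nonempty κ]
    (hD1 : ∀ ζ ξ, D1 ζ ξ ∈ Set.Icc (0 : ℝ) 1) (hφ : ∀ k, Monotone (φ k))
    (hray : MonotoneOnRays D1) {zstar y z : E} (hzstar : phiDepth D1 φ zstar X = 1)
    (hyz : OrderBetween zstar y z) : phiDepth D1 φ z X ≤ phiDepth D1 φ y X := by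
  have hnonneg : ∀ ζ ξ, 0 ≤ D1 ζ ξ := fun ζ ξ => (hD1 ζ ξ).1
  have hdeepest : ∀ k, IsDeepest D1 (φ k zstar) (φ k ∘ X) := fun k =>
    isDeepest_of_forall_le_phiDepth hnonneg fun v => hzstar ▸ (hD1 v _).2
  exact phiDepth_le_phiDepth_of_isDeepest hnonneg hφ hray hdeepest hyz

end PhiDepth

/-- Postulate FD4pw for univariate Φ-depths with increasing functionals. -/
theorem phi_depth_FD4pw
    {E : Type*} [NormedAddCommGroup E] [NormedSpace ℝ E] [PartialOrder E]
    [CovariantClass E E (· + ·) (· ≤ ·)]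
    {n : ℕ} (hn : 0 < n)
    (D1 : ℝ → (Fin n → ℝ) → ℝ)
    (hD101 : ∀ ζ ξ, D1 ζ ξ ∈ Set.Icc (0 : ℝ) 1)
    (Φ : Set (E →L[ℝ] ℝ)) (hΦ : Φ.Nonempty)
    (hmono : ∀ φ ∈ Φ, Monotone φ)
    (hray : ∀ (ξ : Fin n → ℝ) (ζ : ℝ), (∀ v, D1 v ξ ≤ D1 ζ ξ) →
      ∀ a b : ℝ, (ζ ≤ a ∧ a ≤ b) ∨ (b ≤ a ∧ a ≤ ζ) → D1 b ξ ≤ D1 a ξ)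
    (D : E → (Fin n → E) → ℝ)
    (hD : ∀ z X, D z X = sInf {v : ℝ | ∃ φ ∈ Φ, v = D1 (φ z) (fun i => φ (X i))})
    (X : Fin n → E) (zstar : E) (hzstar : D zstar X = 1)
    (y z : E) (hyz : (zstar ≤ y ∧ y ≤ z) ∨ (z ≤ y ∧ y ≤ zstar)) :
    D z X ≤ D y X := by
  have := hΦ.to_subtype
  simp only [hD, sInf_setOf_eq_phiDepth] at hzstar ⊢
  exact phi_depth_FD4pw_general hD101 (fun f : Φ => hmono f f.2) hray hzstar hyz
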